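/- arXiv:1803.09952 — 2 statements merged into one kernel-verified Lean document; each statement's English description precedes it below -/
import Mathlib

section
/- Let (S_1, S_2) be a feasible pair for the Semi-Restricted SSR instance (A,p) such that a_i < Q for every i ∈ S_2 and Σ_{j∈S_2} a_j ≥ 2·Q. Then the pair (S_1, S_2 ∖ {min S_2}) is also feasible for (A,p) and satisfies MR(S_1, S_2 ∖ {min S_2}, A) < MR(S_1, S_2, A). -/
open Finset

/-- Ratio of the sums of two index sets, with weights `f`. -/
noncomputable def ssrR (f : ℕ → ℝ) (S₁ S₂ : Finset ℕ) : ℝ :=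
  (∑ i ∈ S₁, f i) / (∑ j ∈ S₂, f j)

/-- Max ratio of the sums of two index sets, with weights `f`. -/
noncomputable def ssrMR (f : ℕ → ℝ) (S₁ S₂ : Finset ℕ) : ℝ :=
  max (ssrR f S₁ S₂) (ssrR f S₂ S₁)

/-- Feasibility for the Semi-Restricted SSR instance `(A, p)`:
`S₁, S₂ ⊆ {1,…,n}` are nonempty, disjoint, `max S₁ = p` and `max S₂ > p`. -/
def SemiFeasible (n p : ℕ) (S₁ S₂ : Finset ℕ) : Prop :=
  S₁ ⊆ Finset.Icc 1 n ∧ S₂ ⊆ Finset.Icc 1 n ∧ S₁.Nonempty ∧ S₂.Nonempty ∧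
    Disjoint S₁ S₂ ∧ S₁.max = (p : WithBot ℕ) ∧ (p : WithBot ℕ) < S₂.max

/-!
Writing `T` for `S₂` without its minimum, `∑ T ≥ 2Q - Q = Q ≥ ∑ S₁`, the last step because
`S₁ ⊆ {1, …, p}`. So both before and after the removal the max ratio is the sum of the second set
divided by the sum of `S₁`, and the removal decreases this numerator.
-/

theorem max_erase_min'_of_nonempty {α : Type*} [LinearOrder α] {s : Finset α} (hs : s.Nonempty)
    (hs' : (s.erase (s.min' hs)).Nonempty) : (s.erase (s.min' hs)).max = s.max := by
  obtain ⟨x, hx⟩ := hs'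
  obtain ⟨hx_ne, hxs⟩ := mem_erase.1 hx
  have min_lt_max : s.min' hs < s.max' hs := min'_lt_max' s hxs (s.min'_mem hs) hx_ne
  have max_mem : s.max' hs ∈ s.erase (s.min' hs) := mem_erase.2 ⟨min_lt_max.ne', s.max'_mem hs⟩
  refine le_antisymm (max_mono (erase_subset _ s)) ?_
  rw [← coe_max' hs]
  exact le_max max_mem

section MaxRatio

variable {f : ℕ → ℝ} {S₁ S₂ T : Finset ℕ}

theorem ssrMR_eq_ssrR_of_sum_le (hpos : 0 < ∑ i ∈ S₁, f i)
    (hle : ∑ i ∈ S₁, f i ≤ ∑ j ∈ S₂, f j) : ssrMR f S₁ S₂ = ssrR f S₂ S₁ :=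
  max_eq_right <| calc
    ssrR f S₁ S₂ ≤ 1 := (div_le_one (hpos.trans_le hle)).2 hle
    _ ≤ ssrR f S₂ S₁ := (one_le_div hpos).2 hle

theorem ssrMR_lt_ssrMR_of_sum_lt (hpos : 0 < ∑ i ∈ S₁, f i)
    (hle : ∑ i ∈ S₁, f i ≤ ∑ j ∈ T, f j) (hlt : ∑ j ∈ T, f j < ∑ j ∈ S₂, f j) :
    ssrMR f S₁ T < ssrMR f S₁ S₂ := by
  rw [ssrMR_eq_ssrR_of_sum_le hpos hle, ssrMR_eq_ssrR_of_sum_le hpos (hle.trans hlt.le)]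
  exact div_lt_div_of_pos_right hlt hpos

end MaxRatio

namespace SemiFeasible

variable {n p : ℕ} {S₁ S₂ : Finset ℕ}

theorem left_subset_Icc (h : SemiFeasible n p S₁ S₂) : S₁ ⊆ Icc 1 p := by
  obtain ⟨h₁, -, -, -, -, hmax, -⟩ := h
  exact fun i hi => mem_Icc.2 ⟨(mem_Icc.1 (h₁ hi)).1, le_max_of_eq hi hmax⟩

theorem le (h : SemiFeasible n p S₁ S₂) : p ≤ n := by
  obtain ⟨h₁, -, -, -, -, hmax, -⟩ := h
  exact (mem_Icc.1 (h₁ (mem_of_max hmax))).2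

theorem sum_left_pos {M : Type*} [AddCommMonoid M] [PartialOrder M] [IsOrderedCancelAddMonoid M]
    {f : ℕ → M} (h : SemiFeasible n p S₁ S₂) (hf : ∀ i ∈ Icc 1 p, 0 < f i) :
    0 < ∑ i ∈ S₁, f i :=
  sum_pos (fun i hi => hf i (h.left_subset_Icc hi)) h.2.2.1

theorem sum_left_le {M : Type*} [AddCommMonoid M] [PartialOrder M] [IsOrderedAddMonoid M]
    {f : ℕ → M} (h : SemiFeasible n p S₁ S₂) (hf : ∀ i ∈ Icc 1 p, 0 ≤ f i) :
    ∑ i ∈ S₁, f i ≤ ∑ i ∈ Icc 1 p, f i :=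
  sum_le_sum_of_subset_of_nonneg h.left_subset_Icc fun i hi _ => hf i hi

theorem erase_min' (h : SemiFeasible n p S₁ S₂) (hne : S₂.Nonempty)
    (hne' : (S₂.erase (S₂.min' hne)).Nonempty) :
    SemiFeasible n p S₁ (S₂.erase (S₂.min' hne)) := by
  obtain ⟨h₁, h₂, hne₁, -, hdisj, hmax, hlt⟩ := h
  have hsub : S₂.erase (S₂.min' hne) ⊆ S₂ := erase_subset _ _
  exact ⟨h₁, hsub.trans h₂, hne₁, hne', hdisj.mono_right hsub, hmax,
    hlt.trans_eq (max_erase_min'_of_nonempty hne hne').symm⟩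

end SemiFeasible

theorem stmt1_general {n p : ℕ} {f : ℕ → ℝ} {S₁ S₂ : Finset ℕ}
    (hf : ∀ i ∈ Icc 1 n, 0 < f i) (hfeas : SemiFeasible n p S₁ S₂) (hne : S₂.Nonempty)
    (hbig : ∑ i ∈ Icc 1 p, f i + f (S₂.min' hne) ≤ ∑ j ∈ S₂, f j) :
    SemiFeasible n p S₁ (S₂.erase (S₂.min' hne)) ∧
      ssrMR f S₁ (S₂.erase (S₂.min' hne)) < ssrMR f S₁ S₂ := by
  have hfp : ∀ i ∈ Icc 1 p, 0 < f i := fun i hi => hf i (Icc_subset_Icc_right hfeas.le hi)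
  have hmin : S₂.min' hne ∈ S₂ := S₂.min'_mem hne
  have hpos : 0 < ∑ i ∈ S₁, f i := hfeas.sum_left_pos hfp
  have hle : ∑ i ∈ S₁, f i ≤ ∑ j ∈ S₂.erase (S₂.min' hne), f j := calc
    ∑ i ∈ S₁, f i ≤ ∑ i ∈ Icc 1 p, f i := hfeas.sum_left_le fun i hi => (hfp i hi).le
    _ ≤ ∑ j ∈ S₂, f j - f (S₂.min' hne) := le_sub_right_of_add_le hbig
    _ = ∑ j ∈ S₂.erase (S₂.min' hne), f j := (sum_erase_eq_sub hmin).symm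
  have hlt : ∑ j ∈ S₂.erase (S₂.min' hne), f j < ∑ j ∈ S₂, f j := by
    rw [sum_erase_eq_sub hmin]
    exact sub_lt_self _ (hf _ (hfeas.2.1 hmin))
  exact ⟨hfeas.erase_min' hne (nonempty_of_sum_ne_zero (hpos.trans_le hle).ne'),
    ssrMR_lt_ssrMR_of_sum_lt hpos hle hlt⟩

/-- if `(S₁, S₂)` is feasible for `(A, p)`, every element of `S₂` has value
less than `Q`, and `∑_{S₂} a ≥ 2Q`, then `(S₁, S₂ \ {min S₂})` is also feasible and has
strictly smaller max ratio. -/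
theorem stmt1 (n p : ℕ) (a : ℕ → ℕ)
    (hpos : ∀ i ∈ Finset.Icc 1 n, 0 < a i)
    (hmono : StrictMonoOn a (Finset.Icc 1 n))
    (hp1 : 1 ≤ p) (hpn : p < n)
    (Q : ℕ) (hQ : Q = ∑ i ∈ Finset.Icc 1 p, a i)
    (S₁ S₂ : Finset ℕ) (hne₂ : S₂.Nonempty)
    (hfeas : SemiFeasible n p S₁ S₂)
    (hsmall : ∀ i ∈ S₂, a i < Q)
    (hbig : 2 * Q ≤ ∑ j ∈ S₂, a j) :
    SemiFeasible n p S₁ (S₂.erase (S₂.min' hne₂)) ∧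
      ssrMR (fun i => (a i : ℝ)) S₁ (S₂.erase (S₂.min' hne₂)) <
        ssrMR (fun i => (a i : ℝ)) S₁ S₂ := by
  have hsum : Q + a (S₂.min' hne₂) ≤ ∑ j ∈ S₂, a j := by linarith [hsmall _ (S₂.min'_mem hne₂)]
  exact stmt1_general (mod_cast hpos) hfeas hne₂ (mod_cast hQ ▸ hsum)
end

section
/- Let n ≥ 2 and ε ∈ (0,1). For each p ∈ {1,…,n−1}, set δ_p = ε·a_p/(3n) and let A'_p be the scaled instance with entries ⌊a_i/δ_p⌋; let (S_1^p, S_2^p) be a feasible pair for the Semi-Restricted SSR instance (A,p) minimizing MR(S_1,S_2,A'_p) over all feasible pairs for (A,p). Let p̂ ∈ {1,…,n−1} achieve the minimum of MR(S_1^p, S_2^p, A) over p. Then MR(S_1^{p̂}, S_2^{p̂}, A) ≤ (1+ε)·min MR(S_1,S_2,A), where the minimum on the right is taken over all pairs of nonempty disjoint index sets S_1, S_2 ⊆ {1,…,n}. That is, taking the best over p of the optimal solutions of the scaled Semi-Restricted instances yields a (1+ε)-approximation for the Subset-Sums Ratio problem on A. -/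
open Finset

/-!
Rounding down to multiples of `δ = ε aₚ / (3n)` loses less than `δ` per index, so less than
`(n - 1) δ` on the sum over a set with fewer than `n` elements. If that set contains an index
of weight at least `aₚ = 3nδ / ε`, the loss is at most an `ε / 3` fraction of the rounded sum.
Both sides of a semi-restricted pair contain such an index, so passing from the weights to their
rounded versions, or back, costs a factor `1 + ε / 3` in the max ratio, and
`(1 + ε / 3) ^ 2 ≤ 1 + ε` as soon as `ε ≤ 3`. Finally, any pair of nonempty disjoint sets is,
up to a swap, feasible for `p` the smaller of the two maxima.
-/

section ScaleApprox

variable {K : Type*} [Field K] [LinearOrder K] [IsStrictOrderedRing K] {c d x y x' y' : K}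

/-- `x` is a positive number which, after rescaling by `d`, approximates `y` from below within the
factor `c`. It relates the rounded sums to the exact ones; the scale `d` cancels in quotients. -/
structure ScaleApprox (c d x y : K) : Prop where
  pos : 0 < x
  lower : d * x ≤ y
  upper : y ≤ c * (d * x)

namespace ScaleApprox

lemma one_le_factor (hd : 0 < d) (h : ScaleApprox c d x y) : 1 ≤ c :=
  one_le_of_le_mul_right₀ (mul_pos hd h.pos) (h.lower.trans h.upper)

lemma right_pos (hd : 0 < d) (h : ScaleApprox c d x y) : 0 < y :=
  (mul_pos hd h.pos).trans_le h.lower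

lemma symm (hd : 0 < d) (h : ScaleApprox c d x y) : ScaleApprox c (c * d)⁻¹ y x := by
  have hc : 0 < c := one_pos.trans_le (h.one_le_factor hd)
  refine ⟨h.right_pos hd, ?_, ?_⟩
  · rw [inv_mul_le_iff₀ (mul_pos hc hd), mul_assoc]
    exact h.upper
  · rw [mul_inv, mul_assoc, mul_inv_cancel_left₀ hc.ne', le_inv_mul_iff₀ hd]
    exact h.lower

lemma div_le_mul_div (hd : 0 < d) (h : ScaleApprox c d x y) (h' : ScaleApprox c d x' y') :
    y / y' ≤ c * (x / x') :=
  calc y / y' ≤ y / (d * x') :=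
        div_le_div_of_nonneg_left (h.right_pos hd).le (mul_pos hd h'.pos) h'.lower
    _ ≤ c * (d * x) / (d * x') :=
        div_le_div_of_nonneg_right h.upper (mul_pos hd h'.pos).le
    _ = c * (x / x') := by rw [mul_div_assoc, mul_div_mul_left _ _ hd.ne']

end ScaleApprox

end ScaleApprox

section FloorSums

variable {ι K : Type*} [Field K] [LinearOrder K] [IsStrictOrderedRing K] [FloorRing K]
  {s : Finset ι} {i : ι} {a : ι → K} {c δ : K}

lemma mul_sum_floor_div_le (hδ : 0 < δ) : δ * ∑ j ∈ s, (⌊a j / δ⌋ : K) ≤ ∑ j ∈ s, a j := by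
  rw [mul_sum]
  refine sum_le_sum fun j _ => ?_
  rw [← le_div_iff₀' hδ]
  exact Int.floor_le _

lemma sum_le_mul_sum_floor_div_add_card_mul (hδ : 0 < δ) :
    ∑ j ∈ s, a j ≤ δ * ∑ j ∈ s, (⌊a j / δ⌋ : K) + #s * δ := by
  have hterm (j : ι) : a j ≤ δ * ⌊a j / δ⌋ + δ := by
    rw [← mul_add_one, ← div_le_iff₀' hδ]
    exact (Int.lt_floor_add_one _).le
  calc ∑ j ∈ s, a j ≤ ∑ j ∈ s, (δ * (⌊a j / δ⌋ : K) + δ) := sum_le_sum fun j _ => hterm j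
    _ = δ * ∑ j ∈ s, (⌊a j / δ⌋ : K) + #s * δ := by
      rw [sum_add_distrib, ← mul_sum, sum_const, nsmul_eq_mul]

lemma sub_le_mul_sum_floor_div (hδ : 0 < δ) (ha : ∀ j ∈ s, 0 ≤ a j) (hi : i ∈ s) :
    a i - δ ≤ δ * ∑ j ∈ s, (⌊a j / δ⌋ : K) := by
  have hfloor : ∀ j ∈ s, (0 : K) ≤ ⌊a j / δ⌋ := fun j hj =>
    Int.cast_nonneg (Int.floor_nonneg.2 (div_nonneg (ha j hj) hδ.le))
  calc a i - δ = δ * (a i / δ - 1) := by rw [mul_sub_one, mul_div_cancel₀ _ hδ.ne']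
    _ ≤ δ * (⌊a i / δ⌋ : K) := mul_le_mul_of_nonneg_left (Int.sub_one_lt_floor _).le hδ.le
    _ ≤ δ * ∑ j ∈ s, (⌊a j / δ⌋ : K) :=
        mul_le_mul_of_nonneg_left (single_le_sum hfloor hi) hδ.le

lemma scaleApprox_sum_floor_div (hδ : 0 < δ) (hc : 0 ≤ c) (ha : ∀ j ∈ s, 0 ≤ a j) (hi : i ∈ s)
    (hcard : #s * δ ≤ c * (a i - δ)) :
    ScaleApprox (1 + c) δ (∑ j ∈ s, (⌊a j / δ⌋ : K)) (∑ j ∈ s, a j) where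
  pos := by
    have hs : (0 : K) < #s := Nat.cast_pos.2 (card_pos.2 ⟨i, hi⟩)
    have hδi : 0 < a i - δ := pos_of_mul_pos_right ((mul_pos hs hδ).trans_le hcard) hc
    exact pos_of_mul_pos_right (hδi.trans_le (sub_le_mul_sum_floor_div hδ ha hi)) hδ.le
  lower := mul_sum_floor_div_le hδ
  upper := calc
    ∑ j ∈ s, a j ≤ δ * ∑ j ∈ s, (⌊a j / δ⌋ : K) + #s * δ :=
        sum_le_mul_sum_floor_div_add_card_mul hδ
    _ ≤ δ * ∑ j ∈ s, (⌊a j / δ⌋ : K) + c * (δ * ∑ j ∈ s, (⌊a j / δ⌋ : K)) :=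
        add_le_add_right
          (hcard.trans (mul_le_mul_of_nonneg_left (sub_le_mul_sum_floor_div hδ ha hi) hc)) _
    _ = (1 + c) * (δ * ∑ j ∈ s, (⌊a j / δ⌋ : K)) := by rw [one_add_mul]

lemma scaleApprox_sum_floor_div_of_card_lt {n : ℕ} {ε w : K} (hε0 : 0 < ε) (hε3 : ε ≤ 3)
    (hw : 0 < w) (ha : ∀ j ∈ s, 0 ≤ a j) (hi : i ∈ s) (hwi : w ≤ a i) (hs : #s < n) :
    ScaleApprox (1 + ε / 3) (ε * w / (3 * n))
      (∑ j ∈ s, (⌊a j / (ε * w / (3 * n))⌋ : K)) (∑ j ∈ s, a j) := by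
  have hcard : (#s : K) + 1 ≤ n := by exact_mod_cast hs
  have hn : (0 : K) < n := Nat.cast_pos.2 (Nat.zero_lt_of_lt hs)
  set δ := ε * w / (3 * n) with hδ_def
  have hδ : 0 < δ := by positivity
  have hnδ : n * δ = ε / 3 * w := by rw [hδ_def]; field_simp
  refine scaleApprox_sum_floor_div hδ (by positivity) ha hi ?_
  calc #s * δ ≤ (n - 1) * δ := by gcongr; linarith
    _ = ε / 3 * w - 1 * δ := by rw [sub_mul, hnδ]
    _ ≤ ε / 3 * w - ε / 3 * δ := by gcongr; linarith
    _ = ε / 3 * (w - δ) := (mul_sub _ _ _).symm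
    _ ≤ ε / 3 * (a i - δ) := by gcongr

end FloorSums

lemma ssrMR_comm (f : ℕ → ℝ) (S T : Finset ℕ) : ssrMR f S T = ssrMR f T S :=
  max_comm _ _

lemma ssrMR_nonneg {f : ℕ → ℝ} {S T : Finset ℕ} (hS : 0 ≤ ∑ i ∈ S, f i)
    (hT : 0 ≤ ∑ i ∈ T, f i) : 0 ≤ ssrMR f S T :=
  le_max_of_le_left (div_nonneg hS hT)

lemma ssrMR_le_mul_of_scaleApprox {f g : ℕ → ℝ} {S T : Finset ℕ} {c d : ℝ} (hd : 0 < d)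
    (hS : ScaleApprox c d (∑ i ∈ S, g i) (∑ i ∈ S, f i))
    (hT : ScaleApprox c d (∑ i ∈ T, g i) (∑ i ∈ T, f i)) :
    ssrMR f S T ≤ c * ssrMR g S T := by
  have hc : 0 ≤ c := zero_le_one.trans (hS.one_le_factor hd)
  rw [ssrMR, ssrMR, mul_max_of_nonneg _ _ hc]
  exact max_le_max (hS.div_le_mul_div hd hT) (hT.div_le_mul_div hd hS)

/-- The scaled instance `A'ₚ`: the weights `a` measured in units of `δ = ε aₚ / (3n)` and rounded
down. It is indexed by `p` first, so that `scaledInstance n ε a p` is the list `A'ₚ`. -/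
noncomputable def scaledInstance (n : ℕ) (ε : ℝ) (a : ℕ → ℝ) (p i : ℕ) : ℤ :=
  ⌊a i / (ε * a p / (3 * n))⌋

namespace SemiFeasible

variable {n p : ℕ} {S T S₁ S₂ T₁ T₂ : Finset ℕ} {a : ℕ → ℝ} {ε : ℝ}

lemma mem_left (h : SemiFeasible n p S T) : p ∈ S :=
  mem_of_max h.2.2.2.2.2.1

lemma exists_mem_right_gt (h : SemiFeasible n p S T) : ∃ q ∈ T, p < q := by
  obtain ⟨-, -, -, hT, -, -, hlt⟩ := h
  obtain ⟨q, hq⟩ := max_of_nonempty hT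
  exact ⟨q, mem_of_max hq, WithBot.coe_lt_coe.1 (hq ▸ hlt)⟩

lemma mem_Icc (h : SemiFeasible n p S T) : p ∈ Icc 1 n :=
  h.1 h.mem_left

lemma mem_Icc_pred (h : SemiFeasible n p S T) : p ∈ Icc 1 (n - 1) := by
  obtain ⟨q, hq, hpq⟩ := h.exists_mem_right_gt
  have hp := Finset.mem_Icc.1 h.mem_Icc
  have hqn := Finset.mem_Icc.1 (h.2.1 hq)
  exact Finset.mem_Icc.2 ⟨hp.1, by omega⟩

lemma card_add_card_le (h : SemiFeasible n p S T) : #S + #T ≤ n := by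
  obtain ⟨hS, hT, -, -, hdisj, -, -⟩ := h
  simpa only [card_union_of_disjoint hdisj, Nat.card_Icc, add_tsub_cancel_right] using
    card_le_card (union_subset hS hT)

lemma card_left_lt (h : SemiFeasible n p S T) : #S < n := by
  have := h.card_add_card_le
  have := h.2.2.2.1.card_pos
  omega

lemma card_right_lt (h : SemiFeasible n p S T) : #T < n := by
  have := h.card_add_card_le
  have := h.2.2.1.card_pos
  omega

lemma scale_pos (h : SemiFeasible n p S T) (hpos : ∀ i ∈ Icc 1 n, 0 < a i) (hε0 : 0 < ε) :
    0 < ε * a p / (3 * n) := by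
  have hn : 0 < n := Nat.zero_lt_of_lt h.card_left_lt
  have hap : 0 < a p := hpos p h.mem_Icc
  positivity

lemma scaleApprox_left (h : SemiFeasible n p S T) (hpos : ∀ i ∈ Icc 1 n, 0 < a i)
    (hε0 : 0 < ε) (hε3 : ε ≤ 3) :
    ScaleApprox (1 + ε / 3) (ε * a p / (3 * n))
      (∑ i ∈ S, (scaledInstance n ε a p i : ℝ)) (∑ i ∈ S, a i) :=
  scaleApprox_sum_floor_div_of_card_lt hε0 hε3 (hpos p h.mem_Icc)
    (fun i hi => (hpos i (h.1 hi)).le) h.mem_left le_rfl h.card_left_lt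

lemma scaleApprox_right (h : SemiFeasible n p S T) (hpos : ∀ i ∈ Icc 1 n, 0 < a i)
    (hmono : MonotoneOn a (Icc 1 n)) (hε0 : 0 < ε) (hε3 : ε ≤ 3) :
    ScaleApprox (1 + ε / 3) (ε * a p / (3 * n))
      (∑ i ∈ T, (scaledInstance n ε a p i : ℝ)) (∑ i ∈ T, a i) := by
  obtain ⟨q, hq, hpq⟩ := h.exists_mem_right_gt
  exact scaleApprox_sum_floor_div_of_card_lt hε0 hε3 (hpos p h.mem_Icc)
    (fun i hi => (hpos i (h.2.1 hi)).le) hq (hmono h.mem_Icc (h.2.1 hq) hpq.le) h.card_right_lt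

lemma ssrMR_le_mul_ssrMR_scaledInstance (h : SemiFeasible n p S T)
    (hpos : ∀ i ∈ Icc 1 n, 0 < a i) (hmono : MonotoneOn a (Icc 1 n)) (hε0 : 0 < ε)
    (hε3 : ε ≤ 3) :
    ssrMR a S T ≤ (1 + ε / 3) * ssrMR (fun i => (scaledInstance n ε a p i : ℝ)) S T :=
  ssrMR_le_mul_of_scaleApprox (h.scale_pos hpos hε0) (h.scaleApprox_left hpos hε0 hε3)
    (h.scaleApprox_right hpos hmono hε0 hε3)

lemma ssrMR_scaledInstance_le_mul_ssrMR (h : SemiFeasible n p S T)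
    (hpos : ∀ i ∈ Icc 1 n, 0 < a i) (hmono : MonotoneOn a (Icc 1 n)) (hε0 : 0 < ε)
    (hε3 : ε ≤ 3) :
    ssrMR (fun i => (scaledInstance n ε a p i : ℝ)) S T ≤ (1 + ε / 3) * ssrMR a S T := by
  have hδ := h.scale_pos hpos hε0
  exact ssrMR_le_mul_of_scaleApprox (by positivity)
    ((h.scaleApprox_left hpos hε0 hε3).symm hδ)
    ((h.scaleApprox_right hpos hmono hε0 hε3).symm hδ)

lemma ssrMR_le_one_add_mul_ssrMR (hS : SemiFeasible n p S₁ S₂) (hT : SemiFeasible n p T₁ T₂)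
    (hpos : ∀ i ∈ Icc 1 n, 0 < a i) (hmono : MonotoneOn a (Icc 1 n)) (hε0 : 0 < ε)
    (hε3 : ε ≤ 3)
    (hle : ssrMR (fun i => (scaledInstance n ε a p i : ℝ)) S₁ S₂ ≤
      ssrMR (fun i => (scaledInstance n ε a p i : ℝ)) T₁ T₂) :
    ssrMR a S₁ S₂ ≤ (1 + ε) * ssrMR a T₁ T₂ := by
  have hnonneg : 0 ≤ ssrMR a T₁ T₂ :=
    ssrMR_nonneg (sum_nonneg fun i hi => (hpos i (hT.1 hi)).le)
      (sum_nonneg fun i hi => (hpos i (hT.2.1 hi)).le)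
  calc ssrMR a S₁ S₂
      ≤ (1 + ε / 3) * ssrMR (fun i => (scaledInstance n ε a p i : ℝ)) S₁ S₂ :=
        hS.ssrMR_le_mul_ssrMR_scaledInstance hpos hmono hε0 hε3
    _ ≤ (1 + ε / 3) * ssrMR (fun i => (scaledInstance n ε a p i : ℝ)) T₁ T₂ := by gcongr
    _ ≤ (1 + ε / 3) * ((1 + ε / 3) * ssrMR a T₁ T₂) := by
        gcongr
        exact hT.ssrMR_scaledInstance_le_mul_ssrMR hpos hmono hε0 hε3
    _ = (1 + ε / 3) ^ 2 * ssrMR a T₁ T₂ := by ring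
    _ ≤ (1 + ε) * ssrMR a T₁ T₂ := by
        gcongr
        nlinarith

end SemiFeasible

lemma exists_semiFeasible_or_swap {n : ℕ} {T₁ T₂ : Finset ℕ} (h₁ : T₁ ⊆ Icc 1 n)
    (h₂ : T₂ ⊆ Icc 1 n) (hne₁ : T₁.Nonempty) (hne₂ : T₂.Nonempty) (hdisj : Disjoint T₁ T₂) :
    ∃ p, SemiFeasible n p T₁ T₂ ∨ SemiFeasible n p T₂ T₁ := by
  obtain ⟨p, hp⟩ := max_of_nonempty hne₁
  obtain ⟨q, hq⟩ := max_of_nonempty hne₂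
  have hpq : p ≠ q := disjoint_iff_ne.1 hdisj p (mem_of_max hp) q (mem_of_max hq)
  rcases hpq.lt_or_gt with hlt | hgt
  · exact ⟨p, .inl ⟨h₁, h₂, hne₁, hne₂, hdisj, hp, hq ▸ WithBot.coe_lt_coe.2 hlt⟩⟩
  · exact ⟨q, .inr ⟨h₂, h₁, hne₂, hne₁, hdisj.symm, hq, hp ▸ WithBot.coe_lt_coe.2 hgt⟩⟩

theorem stmt12_general {n : ℕ} {a : ℕ → ℝ} (hpos : ∀ i ∈ Icc 1 n, 0 < a i)
    (hmono : MonotoneOn a (Icc 1 n)) {ε : ℝ} (hε0 : 0 < ε) (hε3 : ε ≤ 3)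
    {S₁ S₂ : ℕ → Finset ℕ} (hfeas : ∀ p ∈ Icc 1 (n - 1), SemiFeasible n p (S₁ p) (S₂ p))
    (hoptp : ∀ p ∈ Icc 1 (n - 1), ∀ T₁ T₂ : Finset ℕ, SemiFeasible n p T₁ T₂ →
      ssrMR (fun i => (scaledInstance n ε a p i : ℝ)) (S₁ p) (S₂ p) ≤
        ssrMR (fun i => (scaledInstance n ε a p i : ℝ)) T₁ T₂)
    {phat : ℕ} (hbest : ∀ p ∈ Icc 1 (n - 1),
      ssrMR a (S₁ phat) (S₂ phat) ≤ ssrMR a (S₁ p) (S₂ p))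
    {T₁ T₂ : Finset ℕ} (h₁ : T₁ ⊆ Icc 1 n) (h₂ : T₂ ⊆ Icc 1 n) (hne₁ : T₁.Nonempty)
    (hne₂ : T₂.Nonempty) (hdisj : Disjoint T₁ T₂) :
    ssrMR a (S₁ phat) (S₂ phat) ≤ (1 + ε) * ssrMR a T₁ T₂ := by
  have hsemi {p : ℕ} {U V : Finset ℕ} (hUV : SemiFeasible n p U V) :
      ssrMR a (S₁ phat) (S₂ phat) ≤ (1 + ε) * ssrMR a U V :=
    have hp := hUV.mem_Icc_pred
    (hbest p hp).trans <| (hfeas p hp).ssrMR_le_one_add_mul_ssrMR hUV hpos hmono hε0 hε3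
      (hoptp p hp U V hUV)
  obtain ⟨p, hT | hT⟩ := exists_semiFeasible_or_swap h₁ h₂ hne₁ hne₂ hdisj
  · exact hsemi hT
  · exact ssrMR_comm a T₁ T₂ ▸ hsemi hT

/-- taking, for each `p ∈ {1,…,n−1}`, an optimal feasible pair for the
scaled Semi-Restricted instance `(A'_p, p)`, and then the best of these pairs with
respect to `A`, yields a `(1+ε)`-approximation for Subset-Sums Ratio on `A`. -/
theorem stmt12 (n : ℕ) (hn : 2 ≤ n) (a : ℕ → ℕ)
    (hpos : ∀ i ∈ Finset.Icc 1 n, 0 < a i)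
    (hmono : StrictMonoOn a (Finset.Icc 1 n))
    (ε : ℝ) (hε0 : 0 < ε) (hε1 : ε < 1)
    (a' : ℕ → ℕ → ℤ)
    (ha' : ∀ p i, a' p i = ⌊(a i : ℝ) / (ε * (a p : ℝ) / (3 * n))⌋)
    (S₁ S₂ : ℕ → Finset ℕ)
    (hfeas : ∀ p ∈ Finset.Icc 1 (n - 1), SemiFeasible n p (S₁ p) (S₂ p))
    (hoptp : ∀ p ∈ Finset.Icc 1 (n - 1), ∀ T₁ T₂ : Finset ℕ,
      SemiFeasible n p T₁ T₂ →
      ssrMR (fun i => ((a' p i : ℝ))) (S₁ p) (S₂ p) ≤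
        ssrMR (fun i => ((a' p i : ℝ))) T₁ T₂)
    (phat : ℕ) (hphat : phat ∈ Finset.Icc 1 (n - 1))
    (hbest : ∀ p ∈ Finset.Icc 1 (n - 1),
      ssrMR (fun i => (a i : ℝ)) (S₁ phat) (S₂ phat) ≤
        ssrMR (fun i => (a i : ℝ)) (S₁ p) (S₂ p)) :
    ∀ T₁ T₂ : Finset ℕ, T₁ ⊆ Finset.Icc 1 n → T₂ ⊆ Finset.Icc 1 n →
      T₁.Nonempty → T₂.Nonempty → Disjoint T₁ T₂ →
      ssrMR (fun i => (a i : ℝ)) (S₁ phat) (S₂ phat) ≤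
        (1 + ε) * ssrMR (fun i => (a i : ℝ)) T₁ T₂ := by
  obtain rfl : a' = scaledInstance n ε (fun i => (a i : ℝ)) := funext₂ ha'
  exact fun _ _ => stmt12_general (fun i hi => Nat.cast_pos.2 (hpos i hi))
    (Nat.mono_cast.comp_monotoneOn hmono.monotoneOn) hε0 (by linarith) hfeas hoptp hbest
end
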